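/- Let V be a vertex operator algebra with V = ⊕_{n∈ℕ} V_{(n)} and V_{(0)} = ℂ1, and let W₁, W₂, W₃ be irreducible V-modules such that dim W₁/B(W₁) < ∞. Then the fusion rule dim I(W₃; W₁, W₂) is finite. -/

import Mathlib

noncomputable section

/-- The generalized binomial coefficient `C(m, i)` for `m ∈ ℤ`, `i ∈ ℕ`,
as a complex number: `m(m-1)⋯(m-i+1)/i!`. -/
def cchoose (m : ℤ) (i : ℕ) : ℂ :=
  (∏ j ∈ Finset.range i, ((m : ℂ) - (j : ℂ))) / (Nat.factorial i : ℂ)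

/-- A vertex operator algebra `V = ⊕ₙ V₍ₙ₎` over `ℂ`.  The vertex operator map is
recorded through its modes `op u n v = uₙ v` (so `Y(u,x)v = Σₙ uₙv x^{-n-1}`), with
vacuum `one`, conformal vector `omega` (with `L(k) = ω_{k+1}`), central charge `cc`,
weight grading `wtSpace` with projections `proj`.  The Jacobi identity is recorded in
the equivalent form of the Borcherds identity on modes. -/
structure VOA where
  carrier : Type
  [grp : AddCommGroup carrier]
  [mdl : Module ℂ carrier]
  op : carrier → ℤ → carrier → carrier
  one : carrier
  omega : carrier
  wtSpace : ℤ → Submodule ℂ carrier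
  proj : ℤ → carrier → carrier
  cc : ℂ
  op_linear_left : ∀ (n : ℤ) (w : carrier), IsLinearMap ℂ fun u => op u n w
  op_linear_right : ∀ (u : carrier) (n : ℤ), IsLinearMap ℂ (op u n)
  trunc : ∀ u v : carrier, ∃ N : ℤ, ∀ n : ℤ, N ≤ n → op u n v = 0
  one_op : ∀ (n : ℤ) (v : carrier), op one n v = if n = -1 then v else 0
  create_nonneg : ∀ (v : carrier) (n : ℤ), 0 ≤ n → op v n one = 0
  create : ∀ v : carrier, op v (-1) one = v
  borcherds : ∀ (u v w : carrier) (l m n : ℤ),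
    (∑ᶠ i : ℕ, cchoose m i • op (op u (l + (i : ℤ)) v) (m + n - (i : ℤ)) w)
      = ∑ᶠ i : ℕ, ((-1 : ℂ) ^ i * cchoose l i) •
          (op u (l + m - (i : ℤ)) (op v (n + (i : ℤ)) w)
            - ((-1 : ℂ) ^ l) • op v (l + n - (i : ℤ)) (op u (m + (i : ℤ)) w))
  proj_linear : ∀ n : ℤ, IsLinearMap ℂ (proj n)
  proj_mem : ∀ (n : ℤ) (v : carrier), proj n v ∈ wtSpace n
  proj_eq : ∀ n : ℤ, ∀ v ∈ wtSpace n, proj n v = v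
  proj_ne : ∀ m n : ℤ, m ≠ n → ∀ v ∈ wtSpace m, proj n v = 0
  proj_finite : ∀ v : carrier, (Function.support fun n => proj n v).Finite
  proj_sum : ∀ v : carrier, (∑ᶠ n : ℤ, proj n v) = v
  fd : ∀ n : ℤ, FiniteDimensional ℂ (wtSpace n)
  lower_trunc : ∃ N : ℤ, ∀ n : ℤ, n < N → wtSpace n = ⊥
  one_wt : one ∈ wtSpace 0
  omega_wt : omega ∈ wtSpace 2
  op_wt : ∀ k m n : ℤ, ∀ u ∈ wtSpace k, ∀ v ∈ wtSpace m, op u n v ∈ wtSpace (k + m - n - 1)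
  L_zero : ∀ n : ℤ, ∀ v ∈ wtSpace n, op omega 1 v = (n : ℂ) • v
  L_neg_one : ∀ (u : carrier) (n : ℤ) (w : carrier),
    op (op omega 0 u) n w = (-(n : ℂ)) • op u (n - 1) w
  virasoro : ∀ (m n : ℤ) (v : carrier),
    op omega (m + 1) (op omega (n + 1) v) - op omega (n + 1) (op omega (m + 1) v)
      = ((m : ℂ) - (n : ℂ)) • op omega (m + n + 1) v
        + (if m + n = 0 then (((m : ℂ) ^ 3 - (m : ℂ)) / 12) * cc else 0) • v

attribute [instance] VOA.grp VOA.mdl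

namespace VOA

variable (V : VOA)

/-- The Virasoro operator `L(k) = ω_{k+1}`. -/
def L (k : ℤ) (v : V.carrier) : V.carrier := V.op V.omega (k + 1) v

/-- The positive-weight part `V₊ = ⊕_{n ≥ 1} V₍ₙ₎`. -/
def pos : Submodule ℂ V.carrier := ⨆ (n : ℤ) (_ : 1 ≤ n), V.wtSpace n

/-- Zhu's subspace `C₂(V) = span{u₋₂v : u, v ∈ V}`. -/
def C2 : Submodule ℂ V.carrier :=
  Submodule.span ℂ {x : V.carrier | ∃ u v : V.carrier, x = V.op u (-2) v}

/-- The subspace `C₁(V) = span(v₋₁V₊ (v ∈ V₊) together with L(-1)V)`. -/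
def C1 : Submodule ℂ V.carrier :=
  Submodule.span ℂ
    ({x : V.carrier | ∃ u ∈ V.pos, ∃ v ∈ V.pos, x = V.op u (-1) v}
      ∪ {x : V.carrier | ∃ v : V.carrier, x = V.op V.omega 0 v})

/-- Iterated application of modes: `iterApply [(u¹,n₁),…,(uʳ,n_r)] w = u¹_{n₁} ⋯ uʳ_{n_r} w`. -/
def iterApply : List (V.carrier × ℤ) → V.carrier → V.carrier
  | [], w => w
  | p :: l, w => V.op p.1 p.2 (iterApply l w)

/-- `U ⊆ V` generates `V` as a vertex operator algebra:  `V` is linearly spanned by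
the elements `u¹_{n₁} ⋯ uʳ_{n_r} 1` with `uⁱ ∈ U`, `n_i ∈ ℤ`. -/
def generates (U : Set V.carrier) : Prop :=
  Submodule.span ℂ {x : V.carrier | ∃ l : List (V.carrier × ℤ),
    (∀ p ∈ l, p.1 ∈ U) ∧ x = V.iterApply l V.one} = ⊤

/-- `V` is finitely generated as a vertex operator algebra. -/
def FinitelyGenerated : Prop := ∃ S : Finset V.carrier, V.generates ↑S

end VOA

/-- A weak `V`-module: all axioms of a module (truncation, vacuum, Jacobi identity in
Borcherds form) except those involving gradings. -/
structure WeakModule (V : VOA) where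
  carrier : Type
  [grp : AddCommGroup carrier]
  [mdl : Module ℂ carrier]
  op : V.carrier → ℤ → carrier → carrier
  op_linear_left : ∀ (n : ℤ) (w : carrier), IsLinearMap ℂ fun u => op u n w
  op_linear_right : ∀ (u : V.carrier) (n : ℤ), IsLinearMap ℂ (op u n)
  trunc : ∀ (u : V.carrier) (w : carrier), ∃ N : ℤ, ∀ n : ℤ, N ≤ n → op u n w = 0
  one_op : ∀ (n : ℤ) (w : carrier), op V.one n w = if n = -1 then w else 0
  borcherds : ∀ (u v : V.carrier) (w : carrier) (l m n : ℤ),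
    (∑ᶠ i : ℕ, cchoose m i • op (V.op u (l + (i : ℤ)) v) (m + n - (i : ℤ)) w)
      = ∑ᶠ i : ℕ, ((-1 : ℂ) ^ i * cchoose l i) •
          (op u (l + m - (i : ℤ)) (op v (n + (i : ℤ)) w)
            - ((-1 : ℂ) ^ l) • op v (l + n - (i : ℤ)) (op u (m + (i : ℤ)) w))

attribute [instance] WeakModule.grp WeakModule.mdl

namespace WeakModule

variable {V : VOA} (W : WeakModule V)

/-- `L(0)` acting on a weak module, as a linear map. -/
def L0 : W.carrier →ₗ[ℂ] W.carrier := IsLinearMap.mk' _ (W.op_linear_right V.omega 1)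

/-- The `L(0)`-eigenspace of eigenvalue `h`. -/
def eig (h : ℂ) : Submodule ℂ W.carrier :=
  LinearMap.ker (W.L0 - h • (LinearMap.id : W.carrier →ₗ[ℂ] W.carrier))

/-- The coefficient `v*ₙ` of the adjoint vertex operator
`⟨Y*(v,x)α, w⟩ = ⟨α, Y(e^{xL(1)}(-x^{-2})^{L(0)}v, x^{-1})w⟩` acting on the full dual
space: for `v` homogeneous of weight `h`,
`(v*ₙ α)(w) = (-1)^h Σ_{i≥0} (1/i!) α((L(1)^i v)_{2h-n-i-2} w)`, extended to general
`v` via the weight-space projections. -/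
def dmode (v : V.carrier) (n : ℤ) (α : W.carrier → ℂ) (w : W.carrier) : ℂ :=
  ∑ᶠ h : ℤ, ∑ᶠ i : ℕ,
    ((-1 : ℂ) ^ h / (Nat.factorial i : ℂ)) *
      α (W.op ((V.L 1)^[i] (V.proj h v)) (2 * h - n - (i : ℤ) - 2) w)

/-- `D(W) ⊆ W*`: the linear functionals `α` on `W` such that for every `v ∈ V`,
`Y*(v,x)α ∈ W*((x))`, i.e. `v*ₙ α = 0` for `n` sufficiently large. -/
def DW : Set (W.carrier → ℂ) :=
  {α | IsLinearMap ℂ α ∧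
    ∀ v : V.carrier, ∃ N : ℤ, ∀ n : ℤ, N ≤ n → ∀ w : W.carrier, W.dmode v n α w = 0}

/-- A subspace stable under all modes of all vertex operators, i.e. a `V`-submodule. -/
def IsStable (S : Submodule ℂ W.carrier) : Prop :=
  ∀ (v : V.carrier) (n : ℤ), ∀ m ∈ S, W.op v n m ∈ S

/-- An irreducible (nonzero, no proper nonzero stable subspaces) `V`-submodule. -/
def IsIrreducibleSub (S : Submodule ℂ W.carrier) : Prop :=
  S ≠ ⊥ ∧ W.IsStable S ∧
    ∀ T : Submodule ℂ W.carrier, W.IsStable T → T ≤ S → T = ⊥ ∨ T = S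

/-- A stable subspace which is an ordinary module: `L(0)` acts semisimply on it with
finite-dimensional eigenspaces, and for each `h` the eigenvalues `h + m` do not occur
for `m` a sufficiently negative integer. -/
def IsOrdinarySub (S : Submodule ℂ W.carrier) : Prop :=
  S ≤ (⨆ h : ℂ, W.eig h ⊓ S) ∧ (∀ h : ℂ, FiniteDimensional ℂ ↥(W.eig h ⊓ S)) ∧
    ∀ h : ℂ, ∃ N : ℤ, ∀ m : ℤ, m ≤ N → W.eig (h + (m : ℂ)) ⊓ S = ⊥

/-- The weak module `W` is irreducible. -/
def IsIrreducible : Prop :=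
  (⊥ : Submodule ℂ W.carrier) ≠ ⊤ ∧
    ∀ S : Submodule ℂ W.carrier, W.IsStable S → S = ⊥ ∨ S = ⊤

/-- `Cₙ(W) = span{v₋ₙw : v ∈ V, w ∈ W}`. -/
def Cn (n : ℤ) : Submodule ℂ W.carrier :=
  Submodule.span ℂ {x : W.carrier | ∃ (v : V.carrier) (w : W.carrier), x = W.op v (-n) w}

/-- `B(W) = span(u₋₁W (u ∈ V₊) together with v₀W (v homogeneous, wt v ≥ 2))`. -/
def BW : Submodule ℂ W.carrier :=
  Submodule.span ℂ
    ({x : W.carrier | ∃ v ∈ V.pos, ∃ w : W.carrier, x = W.op v (-1) w}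
      ∪ {x : W.carrier | ∃ k : ℤ, 2 ≤ k ∧ ∃ v ∈ V.wtSpace k, ∃ w : W.carrier, x = W.op v 0 w})

/-- Zhu's subspace `O(W) = span{Σ_{i≥0} C(wt v, i) v_{i-2} w}` so that `A(W) = W/O(W)`. -/
def OW : Submodule ℂ W.carrier :=
  Submodule.span ℂ
    {x : W.carrier | ∃ (k : ℤ) (v : V.carrier), v ∈ V.wtSpace k ∧
      ∃ w : W.carrier, x = ∑ᶠ i : ℕ, cchoose k i • W.op v ((i : ℤ) - 2) w}

/-- A subspace `T ⊇ O(W)` of `W` is closed under the Frenkel–Zhu left and right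
`A(V)`-actions `v * w = Σᵢ C(wt v, i) v_{i-1} w` and `w * v = Σᵢ C(wt v - 1, i) v_{i-1} w`;
for `T ⊇ O(W)` this expresses that `T/O(W)` is an `A(V)`-sub-bimodule of `A(W)`. -/
def BimoduleClosed (T : Submodule ℂ W.carrier) : Prop :=
  ∀ k : ℤ, ∀ v ∈ V.wtSpace k, ∀ w ∈ T,
    (∑ᶠ i : ℕ, cchoose k i • W.op v ((i : ℤ) - 1) w) ∈ T ∧
    (∑ᶠ i : ℕ, cchoose (k - 1) i • W.op v ((i : ℤ) - 1) w) ∈ T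

/-- Equivalence (isomorphism) of weak modules. -/
def Equiv (M N : WeakModule V) : Prop :=
  ∃ e : M.carrier ≃ₗ[ℂ] N.carrier,
    ∀ (v : V.carrier) (n : ℤ) (w : M.carrier), e (M.op v n w) = N.op v n (e w)

end WeakModule

/-- `V` is of class 𝒜: `L(0)` acts semisimply on every weak `V`-module. -/
def VOA.classA (V : VOA) : Prop :=
  ∀ M : WeakModule V, (⨆ h : ℂ, M.eig h) = ⊤

/-- `V` is regular: every weak `V`-module is a direct sum of irreducible ordinary
`V`-modules. -/
def VOA.regular (V : VOA) : Prop :=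
  ∀ M : WeakModule V, ∃ (ι : Type) (S : ι → Submodule ℂ M.carrier),
    (∀ i, M.IsIrreducibleSub (S i) ∧ M.IsOrdinarySub (S i)) ∧
    (∀ i, Disjoint (S i) (⨆ (j : ι) (_ : j ≠ i), S j)) ∧ (⨆ i, S i) = ⊤

/-- A generalized `V`-module: a weak module with a semisimple `L(0)`-action, graded by
the `L(0)`-eigenvalues, with weight-space projections `projW`. -/
structure GenModule (V : VOA) extends WeakModule V where
  wt : ℂ → Submodule ℂ carrier
  projW : ℂ → carrier → carrier
  projW_linear : ∀ h : ℂ, IsLinearMap ℂ (projW h)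
  projW_mem : ∀ (h : ℂ) (w : carrier), projW h w ∈ wt h
  projW_eq : ∀ h : ℂ, ∀ w ∈ wt h, projW h w = w
  projW_ne : ∀ g h : ℂ, g ≠ h → ∀ w ∈ wt g, projW h w = 0
  projW_finite : ∀ w : carrier, (Function.support fun h => projW h w).Finite
  projW_sum : ∀ w : carrier, (∑ᶠ h : ℂ, projW h w) = w
  wt_L0 : ∀ h : ℂ, ∀ w ∈ wt h, op V.omega 1 w = h • w
  wt_op : ∀ k : ℤ, ∀ v ∈ V.wtSpace k, ∀ (h : ℂ) (n : ℤ), ∀ w ∈ wt h,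
    op v n w ∈ wt (h + (k : ℂ) - (n : ℂ) - 1)

/-- An ordinary `V`-module: a generalized module whose weight spaces are
finite-dimensional and whose weights are truncated from below in each coset `h + ℤ`. -/
structure OrdModule (V : VOA) extends GenModule V where
  wt_fd : ∀ h : ℂ, FiniteDimensional ℂ ↥(wt h)
  wt_lower : ∀ h : ℂ, ∃ N : ℤ, ∀ m : ℤ, m ≤ N → wt (h + (m : ℂ)) = ⊥

namespace GenModule

variable {V : VOA} (W : GenModule V)

/-- `W₊ = ⊕_{Re h > 0} W₍ₕ₎`. -/
def posW : Submodule ℂ W.carrier := ⨆ (h : ℂ) (_ : 0 < h.re), W.wt h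

/-- `C₁(W) = span(v₋₁W₊ (v ∈ V₊) together with L(-1)W)`. -/
def C1W : Submodule ℂ W.carrier :=
  Submodule.span ℂ
    ({x : W.carrier | ∃ v ∈ V.pos, ∃ w ∈ W.posW, x = W.op v (-1) w}
      ∪ {x : W.carrier | ∃ w : W.carrier, x = W.op V.omega 0 w})

/-- The restricted dual `W' = ⊕ₕ W₍ₕ₎* ⊆ W*`: the linear functionals vanishing on all
but finitely many weight spaces. -/
def restrictedDual : Set (W.carrier → ℂ) :=
  {α | IsLinearMap ℂ α ∧ {h : ℂ | ∃ w ∈ W.wt h, α w ≠ 0}.Finite}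

end GenModule

/-- `D(W)⁰`: the sum of the `L(0)`-eigenspaces of the weak module `D(W) ⊆ W*`, where
`L*(0) = ω*₁` acts on `α ∈ W*` by `(L*(0)α)(w) = α(L(0)w)`. -/
def OrdModule.DW0 {V : VOA} (W : OrdModule V) : Set (W.carrier → ℂ) :=
  {α | ∃ (S : Finset ℂ) (f : ℂ → (W.carrier → ℂ)),
    (∀ h ∈ S, f h ∈ W.toWeakModule.DW ∧
      ∀ w : W.carrier, f h (W.op V.omega 1 w) = h * f h w) ∧
    α = ∑ h ∈ S, f h}

/-- An ℕ-gradable weak `V`-module: a weak module with an ℕ-grading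
`W = ⊕_{n∈ℕ} W(n)` with `v_m W(n) ⊆ W(wt v + n - m - 1)` (graded pieces of negative
index are zero). -/
structure NGradedModule (V : VOA) extends WeakModule V where
  gr : ℤ → Submodule ℂ carrier
  gr_neg : ∀ n : ℤ, n < 0 → gr n = ⊥
  gr_sup : (⨆ n : ℤ, gr n) = ⊤
  gr_indep : ∀ n : ℤ, Disjoint (gr n) (⨆ (m : ℤ) (_ : m ≠ n), gr m)
  gr_op : ∀ k : ℤ, ∀ v ∈ V.wtSpace k, ∀ m n : ℤ, ∀ w ∈ gr n,
    op v m w ∈ gr (k + n - m - 1)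

/-- An intertwining operator of type `(W₃; W₁ W₂)` in the sense of
Frenkel–Huang–Lepowsky, recorded through its complex-indexed modes
`I w₁ h w₂ = (w₁)ₕ w₂` (so `Y(w₁,x)w₂ = Σ_{h∈ℂ} (w₁)ₕ w₂ x^{-h-1}`):
linearity, truncation, the `L(-1)`-derivative property, and the Jacobi identity in
component (Borcherds) form. -/
def IsIntertwiner {V : VOA} (W1 W2 W3 : OrdModule V)
    (I : W1.carrier → ℂ → W2.carrier → W3.carrier) : Prop :=
  (∀ (h : ℂ) (w2 : W2.carrier), IsLinearMap ℂ fun w1 => I w1 h w2) ∧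
  (∀ (w1 : W1.carrier) (h : ℂ), IsLinearMap ℂ (I w1 h)) ∧
  (∀ (w1 : W1.carrier) (w2 : W2.carrier) (h : ℂ),
    ∃ N : ℤ, ∀ n : ℤ, N ≤ n → I w1 (h + (n : ℂ)) w2 = 0) ∧
  (∀ (w1 : W1.carrier) (h : ℂ) (w2 : W2.carrier),
    I (W1.op V.omega 0 w1) h w2 = (-h) • I w1 (h - 1) w2) ∧
  (∀ (u : V.carrier) (w1 : W1.carrier) (w2 : W2.carrier) (l m : ℤ) (h : ℂ),
    (∑ᶠ i : ℕ, cchoose m i • I (W1.op u (l + (i : ℤ)) w1) ((m : ℂ) + h - (i : ℂ)) w2)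
      = ∑ᶠ i : ℕ, ((-1 : ℂ) ^ i * cchoose l i) •
          (W3.op u (l + m - (i : ℤ)) (I w1 (h + (i : ℂ)) w2)
            - ((-1 : ℂ) ^ l) • I w1 ((l : ℂ) + h - (i : ℂ)) (W2.op u (m + (i : ℤ)) w2)))

/-- The fusion rule `dim I(W₃; W₁W₂)` is finite: the space of intertwining operators of
the indicated type is finite-dimensional. -/
def FusionFinite {V : VOA} (W1 W2 W3 : OrdModule V) : Prop :=
  FiniteDimensional ℂ
    ↥(Submodule.span ℂ {I : W1.carrier → ℂ → W2.carrier → W3.carrier |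
        IsIntertwiner W1 W2 W3 I})

end


section FusionHelpers

theorem cchoose_zero_right (m : ℤ) : cchoose m 0 = 1 := by simp [cchoose]

theorem cchoose_nat_lt (m : ℕ) (i : ℕ) (h : m < i) : cchoose (m : ℤ) i = 0 := by
  unfold cchoose
  rw [Finset.prod_eq_zero (Finset.mem_range.mpr h)]
  · simp
  · simp

theorem cchoose_zero_left (i : ℕ) (h : i ≠ 0) : cchoose 0 i = 0 := by
  have := cchoose_nat_lt 0 i (Nat.pos_of_ne_zero h)
  simpa using this

theorem finsum_mem_sub {M : Type*} [AddCommGroup M] [Module ℂ M] (K : Submodule ℂ M)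
    {ι : Type*} (f : ι → M) (hf : ∀ i, f i ∈ K) : (∑ᶠ i, f i) ∈ K :=
  finsum_induction (fun x => x ∈ K) K.zero_mem (fun _ _ => K.add_mem) hf

theorem zero_term_mem {M : Type*} [AddCommGroup M] [Module ℂ M] (K : Submodule ℂ M)
    (f : ℕ → M) (hfin : (Function.support f).Finite) (hs : (∑ᶠ i, f i) ∈ K)
    (hf : ∀ i, i ≠ 0 → f i ∈ K) : f 0 ∈ K := by
  rw [← Submodule.Quotient.mk_eq_zero] at hs ⊢
  have h := (K.mkQ.toAddMonoidHom).map_finsum (f := f) hfin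
  have h2 : (∑ᶠ i, K.mkQ.toAddMonoidHom (f i)) = K.mkQ.toAddMonoidHom (f 0) := by
    apply finsum_eq_single
    intro i hi
    exact (Submodule.Quotient.mk_eq_zero K).mpr (hf i hi)
  rw [h2] at h
  change K.mkQ.toAddMonoidHom (f 0) = 0
  rw [← h]
  exact hs

theorem support_fin_of_large {M : Type*} [Zero M] (f : ℕ → M) (N : ℤ)
    (h : ∀ i : ℕ, N ≤ (i : ℤ) → f i = 0) : (Function.support f).Finite := by
  refine (Set.finite_lt_nat N.toNat).subset ?_
  intro i hi
  by_contra hc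
  apply hi
  apply h
  simp at hc
  omega

/-- Induction over homogeneous elements of a VOA. -/
theorem VOA.hom_induction {V : VOA} (S : Submodule ℂ V.carrier)
    (h : ∀ n, ∀ v ∈ V.wtSpace n, v ∈ S) (v : V.carrier) : v ∈ S := by
  rw [← V.proj_sum v]
  exact finsum_mem_sub S _ fun n => h n _ (V.proj_mem n v)

theorem GenModule.hom_induction {V : VOA} (W : GenModule V) (S : Submodule ℂ W.carrier)
    (h : ∀ g, ∀ v ∈ W.wt g, v ∈ S) (v : W.carrier) : v ∈ S := by
  rw [← W.projW_sum v]
  exact finsum_mem_sub S _ fun n => h n _ (W.projW_mem n v)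

/-- Projection as a linear map. -/
noncomputable def GenModule.pr {V : VOA} (W : GenModule V) (h : ℂ) :
    W.carrier →ₗ[ℂ] W.carrier := IsLinearMap.mk' _ (W.projW_linear h)

/-- Modes as a linear map. -/
noncomputable def WeakModule.opR {V : VOA} (W : WeakModule V) (u : V.carrier) (n : ℤ) :
    W.carrier →ₗ[ℂ] W.carrier := IsLinearMap.mk' _ (W.op_linear_right u n)

noncomputable def WeakModule.opL {V : VOA} (W : WeakModule V) (n : ℤ) (w : W.carrier) :
    V.carrier →ₗ[ℂ] W.carrier := IsLinearMap.mk' _ (W.op_linear_left n w)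

theorem GenModule.projW_op {V : VOA} (W : GenModule V) (k : ℤ) (u : V.carrier)
    (hu : u ∈ V.wtSpace k) (n : ℤ) (h : ℂ) (x : W.carrier) :
    W.projW h (W.op u n x) = W.op u n (W.projW (h - k + n + 1) x) := by
  have := W.hom_induction
    (LinearMap.ker ((W.pr h).comp (W.opR u n) - (W.opR u n).comp (W.pr (h - k + n + 1)))) ?_ x
  · rw [LinearMap.mem_ker, LinearMap.sub_apply, sub_eq_zero] at this
    exact this
  · intro g v hv
    rw [LinearMap.mem_ker, LinearMap.sub_apply, sub_eq_zero]
    change W.projW h (W.op u n v) = W.op u n (W.projW (h - k + n + 1) v)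
    have hm := W.wt_op k u hu g n v hv
    by_cases hg : g = h - k + n + 1
    · rw [← hg, W.projW_eq g v hv]
      have : g + k - n - 1 = h := by rw [hg]; ring
      rw [this] at hm
      exact W.projW_eq h _ hm
    · rw [W.projW_ne g _ hg v hv, W.projW_ne _ h _ _ hm]
      · exact ((W.opR u n).map_zero).symm
      · intro hc
        apply hg
        rw [← hc]; ring

/-- The span of `u_n w` is a submodule. -/
theorem WeakModule.op_op_mem {V : VOA} (W : WeakModule V) (u v : V.carrier) (p q : ℤ)
    (w : W.carrier) (S : Submodule ℂ W.carrier) (hS : ∀ x k, W.op x k w ∈ S) :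
    W.op u p (W.op v q w) ∈ S := by
  obtain ⟨N, hN⟩ := W.trunc u w
  obtain ⟨N', hN'⟩ := W.trunc v w
  have key : ∀ d : ℕ, ∀ q p : ℤ, N' - q ≤ d → W.op u p (W.op v q w) ∈ S := by
    intro d
    induction d with
    | zero =>
      intro q p hq
      rw [hN' q (by simpa using hq)]
      have := (W.opR u p).map_zero
      change W.op u p 0 = 0 at this
      rw [this]; exact S.zero_mem
    | succ d ih =>
      intro q p hq
      have hb := W.borcherds u v w (p - N) N q
      have hl : (∑ᶠ i : ℕ, cchoose N i • W.op (V.op u (p - N + (i : ℤ)) v) (N + q - (i : ℤ)) w) ∈ S :=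
        finsum_mem_sub S _ fun i => S.smul_mem _ (hS _ _)
      rw [hb] at hl
      have h0 : ∀ i : ℕ, ((-1 : ℂ) ^ i * cchoose (p - N) i) •
          (W.op u (p - N + N - (i : ℤ)) (W.op v (q + (i : ℤ)) w)
            - ((-1 : ℂ) ^ (p - N)) • W.op v (p - N + q - (i : ℤ)) (W.op u (N + (i : ℤ)) w))
          = ((-1 : ℂ) ^ i * cchoose (p - N) i) • W.op u (p - (i : ℤ)) (W.op v (q + (i : ℤ)) w) := by
        intro i
        rw [hN (N + i) (by omega)]
        have := (W.opR v (p - N + q - (i : ℤ))).map_zero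
        change W.op v (p - N + q - (i : ℤ)) 0 = 0 at this
        rw [this, smul_zero, sub_zero]
        congr 2; ring
      simp_rw [h0] at hl
      have := zero_term_mem S _ ?_ hl ?_
      · simpa [cchoose_zero_right] using this
      · apply support_fin_of_large _ (N' - q)
        intro i hi
        rw [hN' _ (by omega)]
        have := (W.opR u (p - (i : ℤ))).map_zero
        change W.op u (p - (i : ℤ)) 0 = 0 at this
        rw [this, smul_zero]
      · intro i hi
        apply S.smul_mem
        apply ih
        push_cast at hq
        omega
  exact key (N' - q).toNat q p (by omega)

theorem WeakModule.span_stable {V : VOA} (W : WeakModule V) (w : W.carrier) :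
    W.IsStable (Submodule.span ℂ {x | ∃ u n, x = W.op u n w}) := by
  intro v n m hm
  have : Submodule.span ℂ {x | ∃ u n, x = W.op u n w} ≤
      (Submodule.span ℂ {x | ∃ u n, x = W.op u n w}).comap (W.opR v n) := by
    rw [Submodule.span_le]
    rintro x ⟨u, k, rfl⟩
    change W.op v n (W.op u k w) ∈ Submodule.span ℂ {x | ∃ u n, x = W.op u n w}
    apply W.op_op_mem
    intro x k
    exact Submodule.subset_span ⟨x, k, rfl⟩
  exact this hm

theorem OrdModule.exists_lowest {V : VOA} (W : OrdModule V)
    (hW : W.toGenModule.toWeakModule.IsIrreducible) :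
    ∃ h : ℂ, W.wt h ≠ ⊥ ∧ ∀ j : ℤ, 0 < j → W.wt (h - j) = ⊥ := by
  obtain ⟨g, hg⟩ : ∃ g, W.wt g ≠ ⊥ := by
    by_contra hc
    push Not at hc
    apply hW.1
    symm
    rw [Submodule.eq_bot_iff]
    intro x _
    have := W.toGenModule.hom_induction ⊥ (fun g v hv => by rw [hc g] at hv; exact hv) x
    simpa using this
  obtain ⟨N, hN⟩ := W.wt_lower g
  obtain ⟨z, hz1, hz2⟩ := Int.exists_least_of_bdd (P := fun m : ℤ => W.wt (g + m) ≠ ⊥)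
    ⟨N, fun m hm => by
      by_contra hc
      exact hm (hN m (by omega))⟩ ⟨0, by simpa using hg⟩
  refine ⟨g + z, hz1, fun j hj => ?_⟩
  by_contra hc
  have := hz2 (z - j) (by
    push_cast
    rwa [← add_sub_assoc])
  omega

section Inter

variable {V : VOA} {W1 W2 W3 : OrdModule V}
  {I : W1.carrier → ℂ → W2.carrier → W3.carrier}

/-- If `π x = 0` and `u_n` does not lower weights then `π (u_n x) = 0`. -/
theorem pr_op_zero (W3 : OrdModule V) (h3 : ℂ) (hl3 : ∀ j : ℤ, 0 < j → W3.wt (h3 - j) = ⊥)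
    (k : ℤ) (u : V.carrier) (hu : u ∈ V.wtSpace k) (n : ℤ) (hn : n ≤ k - 1) (x : W3.carrier)
    (hx : n = k - 1 → W3.projW h3 x = 0) : W3.projW h3 (W3.op u n x) = 0 := by
  rw [W3.toGenModule.projW_op k u hu]
  have : W3.projW (h3 - k + n + 1) x = 0 := by
    by_cases h : n = k - 1
    · have e : h3 - (k : ℂ) + n + 1 = h3 := by rw [h]; push_cast; ring
      rw [e]; exact hx h
    · have hm := W3.projW_mem (h3 - k + n + 1) x
      have e : h3 - (k : ℂ) + n + 1 = h3 - ((k - n - 1 : ℤ) : ℂ) := by push_cast; ring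
      rw [e] at hm ⊢
      rw [hl3 _ (by omega)] at hm
      simpa using hm
  rw [this]
  exact (W3.opR u n).map_zero

theorem low_op_zero (W2 : OrdModule V) (h2 : ℂ) (hl2 : ∀ j : ℤ, 0 < j → W2.wt (h2 - j) = ⊥)
    (k : ℤ) (u : V.carrier) (hu : u ∈ V.wtSpace k) (n : ℤ) (hn : k - 1 < n) (y : W2.carrier)
    (hy : y ∈ W2.wt h2) : W2.op u n y = 0 := by
  have hm := W2.wt_op k u hu h2 n y hy
  have e : h2 + (k : ℂ) - n - 1 = h2 - ((n + 1 - k : ℤ) : ℂ) := by push_cast; ring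
  rw [e, hl2 _ (by omega)] at hm
  simpa using hm

theorem inter_comm (hI : IsIntertwiner W1 W2 W3 I) (u : V.carrier) (w : W1.carrier)
    (y : W2.carrier) (m : ℤ) (h : ℂ) :
    (∑ᶠ i : ℕ, cchoose m i • I (W1.op u (i : ℤ) w) ((m : ℂ) + h - (i : ℂ)) y)
      = W3.op u m (I w h y) - I w h (W2.op u m y) := by
  have := hI.2.2.2.2 u w y 0 m h
  simp only [zero_add] at this
  rw [this, finsum_eq_single _ 0]
  · simp [cchoose_zero_right]
  · intro i hi
    rw [cchoose_zero_left i hi]; simp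

theorem inter_assoc (hI : IsIntertwiner W1 W2 W3 I) (u : V.carrier) (w : W1.carrier)
    (y : W2.carrier) (h : ℂ) :
    I (W1.op u (-1) w) h y = ∑ᶠ i : ℕ, ((-1 : ℂ) ^ i * cchoose (-1) i) •
          (W3.op u (-1 - (i : ℤ)) (I w (h + (i : ℂ)) y)
            + I w (-1 + h - (i : ℂ)) (W2.op u (i : ℤ) y)) := by
  have := hI.2.2.2.2 u w y (-1) 0 h
  rw [finsum_eq_single _ 0] at this
  · simpa [cchoose_zero_right] using this
  · intro i hi
    rw [cchoose_zero_left i hi]; simp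

theorem inter_zero_left (hI : IsIntertwiner W1 W2 W3 I) (h : ℂ) (y : W2.carrier) :
    I 0 h y = 0 := (hI.1 h y).map_zero

theorem inter_zero_right (hI : IsIntertwiner W1 W2 W3 I) (h : ℂ) (w : W1.carrier) :
    I w h 0 = 0 := (hI.2.1 w h).map_zero

/-- Vectors `w` whose lowest-to-lowest matrix coefficients vanish. -/
def PI (hI : IsIntertwiner W1 W2 W3 I) (h2 h3 : ℂ) : Submodule ℂ W1.carrier where
  carrier := {w | ∀ h, ∀ y ∈ W2.wt h2, W3.projW h3 (I w h y) = 0}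
  zero_mem' := by
    intro h y _
    rw [inter_zero_left hI]
    exact (W3.projW_linear h3).map_zero
  add_mem' := by
    intro a b ha hb h y hy
    have := (hI.1 h y).map_add a b
    rw [this, (W3.projW_linear h3).map_add, ha h y hy, hb h y hy, add_zero]
  smul_mem' := by
    intro c a ha h y hy
    have := (hI.1 h y).map_smul c a
    rw [this, (W3.projW_linear h3).map_smul, ha h y hy, smul_zero]

theorem mem_PI (hI : IsIntertwiner W1 W2 W3 I) (h2 h3 : ℂ) (w : W1.carrier) :
    w ∈ PI hI h2 h3 ↔ ∀ h, ∀ y ∈ W2.wt h2, W3.projW h3 (I w h y) = 0 := Iff.rfl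

theorem lemB (hI : IsIntertwiner W1 W2 W3 I) (h2 h3 : ℂ)
    (hl3 : ∀ j : ℤ, 0 < j → W3.wt (h3 - j) = ⊥)
    (k : ℤ) (u : V.carrier) (hu : u ∈ V.wtSpace k) (w : W1.carrier)
    (hw : w ∈ PI hI h2 h3) (hw' : ∀ j : ℕ, W1.op u j w ∈ PI hI h2 h3)
    (n : ℤ) (hn : n ≤ k - 1) (h : ℂ) (y : W2.carrier) (hy : y ∈ W2.wt h2) :
    W3.projW h3 (I w h (W2.op u n y)) = 0 := by
  have hc := inter_comm hI u w y n h
  have hL : (∑ᶠ i : ℕ, cchoose n i • I (W1.op u (i : ℤ) w) ((n : ℂ) + h - (i : ℂ)) y) ∈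
      LinearMap.ker (W3.pr h3) :=
    finsum_mem_sub _ _ fun i => Submodule.smul_mem _ _ (hw' i _ y hy)
  rw [hc] at hL
  have h1 : W3.op u n (I w h y) ∈ LinearMap.ker (W3.pr h3) :=
    pr_op_zero W3 h3 hl3 k u hu n hn _ fun _ => hw h y hy
  have := Submodule.sub_mem _ h1 hL
  rw [sub_sub_cancel] at this
  exact this

theorem lemC (hI : IsIntertwiner W1 W2 W3 I) (h2 h3 : ℂ)
    (hl2 : ∀ j : ℤ, 0 < j → W2.wt (h2 - j) = ⊥)
    (hl3 : ∀ j : ℤ, 0 < j → W3.wt (h3 - j) = ⊥)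
    (k : ℤ) (hk : 1 ≤ k) (u : V.carrier) (hu : u ∈ V.wtSpace k) (w : W1.carrier)
    (hw : w ∈ PI hI h2 h3) (hw' : ∀ j : ℕ, W1.op u j w ∈ PI hI h2 h3) :
    W1.op u (-1) w ∈ PI hI h2 h3 := by
  intro h y hy
  rw [inter_assoc hI]
  refine finsum_mem_sub (LinearMap.ker (W3.pr h3)) _ fun i => Submodule.smul_mem _ _
    (Submodule.add_mem _ ?_ ?_)
  · exact pr_op_zero W3 h3 hl3 k u hu _ (by omega) _ (fun hh => by omega)
  · by_cases hi : (i : ℤ) ≤ k - 1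
    · exact lemB hI h2 h3 hl3 k u hu w hw hw' i hi _ y hy
    · rw [low_op_zero W2 h2 hl2 k u hu i (by omega) y hy, inter_zero_right hI]
      exact Submodule.zero_mem _

theorem lemD (hI : IsIntertwiner W1 W2 W3 I) (h2 h3 : ℂ)
    (hl3 : ∀ j : ℤ, 0 < j → W3.wt (h3 - j) = ⊥)
    (k : ℤ) (u : V.carrier) (hu : u ∈ V.wtSpace k) (w : W1.carrier)
    (hw : w ∈ PI hI h2 h3) (hw' : ∀ j : ℕ, j ≠ 0 → W1.op u j w ∈ PI hI h2 h3) :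
    W1.op u 0 w ∈ PI hI h2 h3 := by
  intro h y hy
  have hc := inter_comm hI u w y (k - 1) (h - ((k - 1 : ℤ) : ℂ))
  have hR : W3.op u (k - 1) (I w (h - ((k - 1 : ℤ) : ℂ)) y)
      - I w (h - ((k - 1 : ℤ) : ℂ)) (W2.op u (k - 1) y) ∈ LinearMap.ker (W3.pr h3) := by
    apply Submodule.sub_mem
    · exact pr_op_zero W3 h3 hl3 k u hu _ le_rfl _ fun _ => hw _ y hy
    · apply hw
      have hm := W2.wt_op k u hu h2 (k - 1) y hy
      have e : h2 + (k : ℂ) - ((k - 1 : ℤ) : ℂ) - 1 = h2 := by push_cast; ring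
      rwa [e] at hm
  rw [← hc] at hR
  have := zero_term_mem _ _ ?_ hR ?_
  · simp only [cchoose_zero_right, one_smul, Nat.cast_zero, sub_zero, add_sub_cancel] at this
    exact this
  · obtain ⟨N, hN⟩ := W1.trunc u w
    apply support_fin_of_large _ N
    intro i hi
    rw [hN i hi, inter_zero_left hI, smul_zero]
  · intro i hi
    exact Submodule.smul_mem _ _ (hw' i hi _ y hy)

/-- The inductive step over the weights of `W1`. -/
theorem PI_top (hI : IsIntertwiner W1 W2 W3 I) (h2 h3 : ℂ)
    (hl2 : ∀ j : ℤ, 0 < j → W2.wt (h2 - j) = ⊥)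
    (hl3 : ∀ j : ℤ, 0 < j → W3.wt (h3 - j) = ⊥)
    (T : Set W1.carrier) (hT : Submodule.span ℂ T ⊔ W1.toGenModule.toWeakModule.BW = ⊤)
    (hTP : ∀ t ∈ T, ∀ a, W1.projW a t ∈ PI hI h2 h3) (w : W1.carrier) :
    w ∈ PI hI h2 h3 := by
  refine W1.toGenModule.hom_induction _ (fun a w hw => ?_) w
  obtain ⟨N, hN⟩ := W1.wt_lower a
  have key : ∀ d : ℕ, ∀ n : ℤ, n - N ≤ d → ∀ w ∈ W1.wt (a + n), w ∈ PI hI h2 h3 := by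
    intro d
    induction d with
    | zero =>
      intro n hn w hw
      rw [hN n (by push_cast at hn; omega)] at hw
      rw [(Submodule.mem_bot ℂ).mp hw]
      exact Submodule.zero_mem _
    | succ d ih =>
      intro n hn w hw
      push_cast at hn
      have hw1 : W1.op V.one (-1) w = w := by rw [W1.one_op]; simp
      have hall : (⊤ : Submodule ℂ W1.carrier) ≤ (PI hI h2 h3).comap (W1.pr (a + n)) := by
        rw [← hT, sup_le_iff]
        constructor
        · rw [Submodule.span_le]
          intro t ht
          exact hTP t ht _
        · unfold WeakModule.BW
          rw [Submodule.span_le]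
          rintro x (⟨v, hv, x, rfl⟩ | ⟨k, hk, v, hv, x, rfl⟩)
          · have hpos : V.pos ≤ ((PI hI h2 h3).comap (W1.pr (a + n))).comap (W1.opL (-1) x) := by
              unfold VOA.pos
              refine iSup₂_le fun k hk u hu => ?_
              change W1.projW (a + n) (W1.op u (-1) x) ∈ PI hI h2 h3
              rw [W1.toGenModule.projW_op k u hu]
              have hm := W1.projW_mem (a + n - k + ((-1 : ℤ) : ℂ) + 1) x
              set x' := W1.projW (a + n - k + ((-1 : ℤ) : ℂ) + 1) x
              have e : a + n - k + ((-1 : ℤ) : ℂ) + 1 = a + ((n - k : ℤ) : ℂ) := by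
                push_cast; ring
              rw [e] at hm
              apply lemC hI h2 h3 hl2 hl3 k hk u hu
              · exact ih _ (by omega) _ hm
              · intro j
                have hm2 := W1.wt_op k u hu _ j _ hm
                have e2 : a + ((n - k : ℤ) : ℂ) + k - ((j : ℤ) : ℂ) - 1
                    = a + ((n - j - 1 : ℤ) : ℂ) := by push_cast; ring
                rw [e2] at hm2
                exact ih _ (by omega) _ hm2
            exact hpos hv
          · change W1.projW (a + n) (W1.op v 0 x) ∈ PI hI h2 h3
            rw [W1.toGenModule.projW_op k v hv]
            have hm := W1.projW_mem (a + n - k + ((0 : ℤ) : ℂ) + 1) x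
            set x' := W1.projW (a + n - k + ((0 : ℤ) : ℂ) + 1) x
            have e : a + n - k + ((0 : ℤ) : ℂ) + 1 = a + ((n - k + 1 : ℤ) : ℂ) := by
              push_cast; ring
            rw [e] at hm
            apply lemD hI h2 h3 hl3 k v hv
            · exact ih _ (by omega) _ hm
            · intro j hj
              have hm2 := W1.wt_op k v hv _ j _ hm
              have e2 : a + ((n - k + 1 : ℤ) : ℂ) + k - ((j : ℤ) : ℂ) - 1
                  = a + ((n - j : ℤ) : ℂ) := by push_cast; ring
              rw [e2] at hm2
              exact ih _ (by omega) _ hm2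
      have := hall (Submodule.mem_top (x := w))
      change W1.projW (a + n) w ∈ PI hI h2 h3 at this
      rwa [W1.projW_eq _ w hw] at this
  exact key (0 - N).toNat 0 (by omega) w (by simpa using hw)

theorem inter_eq_zero (hI : IsIntertwiner W1 W2 W3 I) (h2 h3 : ℂ)
    (hl2 : ∀ j : ℤ, 0 < j → W2.wt (h2 - j) = ⊥)
    (hl3 : ∀ j : ℤ, 0 < j → W3.wt (h3 - j) = ⊥)
    (hn2 : W2.wt h2 ≠ ⊥) (hn3 : W3.wt h3 ≠ ⊥)
    (hi2 : W2.toGenModule.toWeakModule.IsIrreducible)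
    (hi3 : W3.toGenModule.toWeakModule.IsIrreducible)
    (hP : ∀ w, w ∈ PI hI h2 h3) : I = 0 := by
  -- step 1
  have s1 : ∀ w h y, W3.projW h3 (I w h y) = 0 := by
    intro w h
    obtain ⟨y0, hy0, hy0n⟩ := Submodule.exists_mem_ne_zero_of_ne_bot hn2
    have htop : Submodule.span ℂ {x | ∃ u n, x = W2.op u n y0} = ⊤ := by
      refine (hi2.2 _ (W2.toWeakModule.span_stable y0)).resolve_left fun hb => hy0n ?_
      have : y0 ∈ Submodule.span ℂ {x | ∃ u n, x = W2.op u n y0} :=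
        Submodule.subset_span ⟨V.one, -1, by rw [W2.one_op]; simp⟩
      rw [hb] at this
      simpa using this
    let F : W2.carrier →ₗ[ℂ] W3.carrier := (W3.pr h3).comp (IsLinearMap.mk' _ (hI.2.1 w h))
    have hle : (⊤ : Submodule ℂ W2.carrier) ≤ LinearMap.ker F := by
      rw [← htop, Submodule.span_le]
      rintro x ⟨u, n, rfl⟩
      have : u ∈ (LinearMap.ker F).comap (W2.opL n y0) := by
        refine V.hom_induction _ (fun k u hu => ?_) u
        change W3.projW h3 (I w h (W2.op u n y0)) = 0
        by_cases hn : n ≤ k - 1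
        · exact lemB hI h2 h3 hl3 k u hu w (hP _) (fun _ => hP _) n hn h y0 hy0
        · rw [low_op_zero W2 h2 hl2 k u hu n (by omega) y0 hy0, inter_zero_right hI]
          exact (W3.pr h3).map_zero
      exact this
    intro y
    exact hle (Submodule.mem_top (x := y))
  -- step 2
  let N : Submodule ℂ W3.carrier :=
    ⨅ (u : V.carrier) (n : ℤ), LinearMap.ker ((W3.pr h3).comp (W3.opR u n))
  have hN : ∀ x, x ∈ N ↔ ∀ u n, W3.projW h3 (W3.op u n x) = 0 := by
    intro x
    simp only [N, Submodule.mem_iInf]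
    rfl
  have hst : W3.toGenModule.toWeakModule.IsStable N := by
    intro v n x hx
    rw [hN] at hx ⊢
    intro u m
    exact W3.toWeakModule.op_op_mem u v m n x (LinearMap.ker (W3.pr h3)) fun y k => hx y k
  have hbot : N = ⊥ := by
    refine (hi3.2 N hst).resolve_right fun ht => ?_
    obtain ⟨y0, hy0, hy0n⟩ := Submodule.exists_mem_ne_zero_of_ne_bot hn3
    have : y0 ∈ N := ht ▸ Submodule.mem_top
    have := (hN y0).mp this V.one (-1)
    rw [W3.one_op, if_pos rfl, W3.projW_eq _ _ hy0] at this
    exact hy0n this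
  funext w h y
  have : I w h y ∈ N := by
    rw [hN]
    intro u n
    have hc := inter_comm hI u w y n h
    have hL : (∑ᶠ i : ℕ, cchoose n i • I (W1.op u (i : ℤ) w) ((n : ℂ) + h - (i : ℂ)) y) ∈
        LinearMap.ker (W3.pr h3) :=
      finsum_mem_sub _ _ fun i => Submodule.smul_mem _ _ (s1 _ _ _)
    rw [hc] at hL
    have h2 : I w h (W2.op u n y) ∈ LinearMap.ker (W3.pr h3) := s1 _ _ _
    have := Submodule.add_mem _ hL h2
    rw [sub_add_cancel] at this
    exact this
  rw [hbot] at this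
  exact (Submodule.mem_bot ℂ).mp this

/-- Weight consideration. -/
theorem inter_weight (hI : IsIntertwiner W1 W2 W3 I) (h2 h3 a h : ℂ) (w : W1.carrier)
    (hw : w ∈ W1.wt a) (y : W2.carrier) (hy : y ∈ W2.wt h2) (hne : h ≠ a + h2 - h3 - 1) :
    W3.projW h3 (I w h y) = 0 := by
  have hc := inter_comm hI V.omega w y 1 h
  rw [finsum_eq_sum_of_support_subset (s := Finset.range 2), Finset.sum_range_succ,
    Finset.sum_range_one] at hc
  · have c1 : cchoose 1 1 = 1 := by simp [cchoose]
    have e : ((1 : ℤ) : ℂ) + h - ((1 : ℕ) : ℂ) = h := by push_cast; ring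
    have e0 : ((1 : ℤ) : ℂ) + h - ((0 : ℕ) : ℂ) = h + 1 := by push_cast; ring
    rw [e, e0, c1, cchoose_zero_right, one_smul, one_smul] at hc
    have d := hI.2.2.2.1 w (h + 1) y
    rw [add_sub_cancel_right] at d
    have a1 : I (W1.op V.omega 1 w) h y = a • I w h y := by
      rw [W1.wt_L0 a w hw]; exact (hI.1 h y).map_smul a w
    have a2 : I w h (W2.op V.omega 1 y) = h2 • I w h y := by
      rw [W2.wt_L0 h2 y hy]; exact (hI.2.1 w h).map_smul h2 y
    have hc2 : (-(h + 1)) • I w h y + a • I w h y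
        = W3.op V.omega 1 (I w h y) - h2 • I w h y := by
      rw [← d, ← a1, ← a2]; exact_mod_cast hc
    have hp := congrArg (W3.pr h3) hc2
    have hp3 : W3.pr h3 (W3.op V.omega 1 (I w h y)) = h3 • W3.pr h3 (I w h y) := by
      change W3.projW h3 (W3.op V.omega 1 (I w h y)) = h3 • W3.projW h3 (I w h y)
      rw [W3.toGenModule.projW_op 2 V.omega V.omega_wt]
      have e : h3 - ((2 : ℤ) : ℂ) + ((1 : ℤ) : ℂ) + 1 = h3 := by push_cast; ring
      rw [e]
      exact W3.wt_L0 h3 _ (W3.projW_mem _ _)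
    rw [map_add, map_sub, hp3, map_smul, map_smul, map_smul] at hp
    have hz : (a + h2 - h3 - 1 - h) • W3.pr h3 (I w h y) = 0 := by
      rw [← sub_eq_zero] at hp
      rw [← hp]
      module
    rcases smul_eq_zero.mp hz with hz | hz
    · exact absurd (sub_eq_zero.mp hz).symm hne
    · exact hz
  · intro i hi
    by_contra hc
    apply hi
    have : cchoose 1 i = 0 := by
      have := cchoose_nat_lt 1 i (by simp at hc; omega)
      simpa using this
    simp [this]

/-- Intertwining operators form a subspace. -/
theorem rhs_fin (hI : IsIntertwiner W1 W2 W3 I) (u : V.carrier) (w1 : W1.carrier)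
    (w2 : W2.carrier) (l m : ℤ) (h : ℂ) :
    (Function.support fun i : ℕ => ((-1 : ℂ) ^ i * cchoose l i) •
          (W3.op u (l + m - (i : ℤ)) (I w1 (h + (i : ℂ)) w2)
            - ((-1 : ℂ) ^ l) • I w1 ((l : ℂ) + h - (i : ℂ)) (W2.op u (m + (i : ℤ)) w2))).Finite := by
  obtain ⟨N, hN⟩ := W2.trunc u w2
  obtain ⟨N', hN'⟩ := hI.2.2.1 w1 w2 h
  apply support_fin_of_large _ (max (N - m) N')
  intro i hi
  have hz : W3.op u (l + m - i) 0 = 0 := (W3.opR u (l + m - i)).map_zero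
  have := hN' i (le_trans (le_max_right _ _) hi)
  rw [Int.cast_natCast] at this
  rw [hN _ (by have := le_trans (le_max_left _ _) hi; omega), this,
    inter_zero_right hI, hz]
  simp

theorem lhs_fin (hI : IsIntertwiner W1 W2 W3 I) (u : V.carrier) (w1 : W1.carrier)
    (w2 : W2.carrier) (l m : ℤ) (h : ℂ) :
    (Function.support fun i : ℕ =>
      cchoose m i • I (W1.op u (l + (i : ℤ)) w1) ((m : ℂ) + h - (i : ℂ)) w2).Finite := by
  obtain ⟨N, hN⟩ := W1.trunc u w1
  apply support_fin_of_large _ (N - l)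
  intro i hi
  rw [hN _ (by omega), inter_zero_left hI, smul_zero]

def interSub (W1 W2 W3 : OrdModule V) :
    Submodule ℂ (W1.carrier → ℂ → W2.carrier → W3.carrier) where
  carrier := {I | IsIntertwiner W1 W2 W3 I}
  zero_mem' := by
    refine ⟨fun h y => ⟨by simp, by simp⟩, fun h y => ⟨by simp, by simp⟩,
      fun _ _ _ => ⟨0, by simp⟩, by simp, ?_⟩
    intro u w y l m h
    have hz : ∀ n, W3.op u n 0 = 0 := fun n => (W3.opR u n).map_zero
    simp [hz]
  add_mem' := by
    intro I J hI hJ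
    refine ⟨fun h y => ⟨fun a b => ?_, fun c a => ?_⟩, fun w h => ⟨fun a b => ?_, fun c a => ?_⟩,
      fun w y h => ?_, fun w h y => ?_, fun u w y l m h => ?_⟩
    · have h1 := (hI.1 h y).map_add a b
      have h2 := (hJ.1 h y).map_add a b
      simp only [Pi.add_apply]
      rw [h1, h2]; abel
    · have h1 := (hI.1 h y).map_smul c a
      have h2 := (hJ.1 h y).map_smul c a
      simp only [Pi.add_apply]
      rw [h1, h2, smul_add]
    · simp only [Pi.add_apply]
      rw [(hI.2.1 w h).map_add, (hJ.2.1 w h).map_add]; abel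
    · simp only [Pi.add_apply]
      rw [(hI.2.1 w h).map_smul, (hJ.2.1 w h).map_smul, smul_add]
    · obtain ⟨N, hN⟩ := hI.2.2.1 w y h
      obtain ⟨N', hN'⟩ := hJ.2.2.1 w y h
      refine ⟨max N N', fun n hn => ?_⟩
      simp only [Pi.add_apply]
      rw [hN n (le_trans (le_max_left _ _) hn), hN' n (le_trans (le_max_right _ _) hn), add_zero]
    · simp only [Pi.add_apply]
      rw [hI.2.2.2.1, hJ.2.2.2.1, smul_add]
    · have h1 := hI.2.2.2.2 u w y l m h
      have h2 := hJ.2.2.2.2 u w y l m h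
      have h3 := congrArg₂ (· + ·) h1 h2
      rw [← finsum_add_distrib (lhs_fin hI u w y l m h) (lhs_fin hJ u w y l m h),
        ← finsum_add_distrib (rhs_fin hI u w y l m h) (rhs_fin hJ u w y l m h)] at h3
      have hadd : ∀ n a b, W3.op u n (a + b) = W3.op u n a + W3.op u n b :=
        fun n => (W3.op_linear_right u n).map_add
      refine Eq.trans ?_ (h3.trans ?_)
      · apply finsum_congr
        intro i
        simp only [Pi.add_apply, smul_add]
      · apply finsum_congr
        intro i
        simp only [Pi.add_apply, hadd]
        module
  smul_mem' := by
    intro c I hI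
    refine ⟨fun h y => ⟨fun a b => ?_, fun d a => ?_⟩, fun w h => ⟨fun a b => ?_, fun d a => ?_⟩,
      fun w y h => ?_, fun w h y => ?_, fun u w y l m h => ?_⟩
    · have h1 := (hI.1 h y).map_add a b
      simp only [Pi.smul_apply]
      rw [h1, smul_add]
    · have h1 := (hI.1 h y).map_smul d a
      simp only [Pi.smul_apply]
      rw [h1, smul_comm]
    · simp only [Pi.smul_apply]
      rw [(hI.2.1 w h).map_add, smul_add]
    · simp only [Pi.smul_apply]
      rw [(hI.2.1 w h).map_smul, smul_comm]
    · obtain ⟨N, hN⟩ := hI.2.2.1 w y h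
      refine ⟨N, fun n hn => ?_⟩
      simp only [Pi.smul_apply]
      rw [hN n hn, smul_zero]
    · simp only [Pi.smul_apply]
      rw [hI.2.2.2.1, smul_comm]
    · have h1 := congrArg (c • ·) (hI.2.2.2.2 u w y l m h)
      rw [smul_finsum, smul_finsum] at h1
      have hs : ∀ n a, W3.op u n (c • a) = c • W3.op u n a :=
        fun n => (W3.op_linear_right u n).map_smul c
      refine Eq.trans ?_ (h1.trans ?_)
      · apply finsum_congr
        intro i
        simp only [Pi.smul_apply]
        rw [smul_comm]
      · apply finsum_congr
        intro i
        simp only [Pi.smul_apply, hs]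
        module

theorem exists_finite_span {M : Type*} [AddCommGroup M] [Module ℂ M] (B : Submodule ℂ M)
    [hB : FiniteDimensional ℂ (M ⧸ B)] : ∃ T : Set M, T.Finite ∧ Submodule.span ℂ T ⊔ B = ⊤ := by
  obtain ⟨S, hS⟩ := hB.fg_top
  refine ⟨Quotient.out '' (S : Set (M ⧸ B)), S.finite_toSet.image _, ?_⟩
  have hm : Submodule.map B.mkQ (Submodule.span ℂ (Quotient.out '' (S : Set (M ⧸ B)))) = ⊤ := by
    rw [Submodule.map_span, ← Set.image_comp]
    have : (B.mkQ ∘ Quotient.out : M ⧸ B → M ⧸ B) = id := by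
      funext x
      exact Quotient.out_eq x
    rw [this, Set.image_id, hS]
  have h := congrArg (Submodule.comap B.mkQ) hm
  rw [Submodule.comap_map_mkQ, Submodule.comap_top, sup_comm] at h
  exact h

/-- Linear map to lowest-weight matrix coefficients. -/
noncomputable def coeffMap (W1 W2 W3 : OrdModule V) (h2 h3 : ℂ) (G1 : Set (ℂ × W1.carrier))
    (G2 : Set W2.carrier) :
    (W1.carrier → ℂ → W2.carrier → W3.carrier) →ₗ[ℂ] (G1 → G2 → W3.wt h3) where
  toFun I g y := ⟨W3.projW h3 (I g.1.2 (g.1.1 + h2 - h3 - 1) y), W3.projW_mem _ _⟩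
  map_add' I J := by
    funext g y
    ext
    exact (W3.projW_linear h3).map_add _ _
  map_smul' c I := by
    funext g y
    ext
    exact (W3.projW_linear h3).map_smul _ _

theorem fusion_main (W1 W2 W3 : OrdModule V)
    (h2 : W2.toGenModule.toWeakModule.IsIrreducible)
    (h3 : W3.toGenModule.toWeakModule.IsIrreducible)
    (hB : FiniteDimensional ℂ (W1.carrier ⧸ W1.toGenModule.toWeakModule.BW)) :
    FusionFinite W1 W2 W3 := by
  obtain ⟨a2, hn2, hl2⟩ := W2.exists_lowest h2
  obtain ⟨a3, hn3, hl3⟩ := W3.exists_lowest h3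
  obtain ⟨T, hTf, hT⟩ := exists_finite_span W1.toGenModule.toWeakModule.BW
  have := W2.wt_fd a2
  have := W3.wt_fd a3
  obtain ⟨G2, hG2⟩ := (IsNoetherian.noetherian (⊤ : Submodule ℂ (W2.wt a2)))
  have hG2' : Submodule.span ℂ (Subtype.val '' (G2 : Set (W2.wt a2))) = W2.wt a2 := by
    have h := Submodule.map_span (W2.wt a2).subtype (G2 : Set (W2.wt a2))
    rw [hG2, Submodule.map_top, Submodule.range_subtype] at h
    exact h.symm
  let G1 : Set (ℂ × W1.carrier) :=
    ⋃ t ∈ T, (fun a => (a, W1.projW a t)) '' (Function.support fun a => W1.projW a t)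
  have hG1 : G1.Finite := hTf.biUnion fun t _ => (W1.projW_finite t).image _
  have : Finite G1 := hG1
  let G2' : Set W2.carrier := Subtype.val '' (G2 : Set (W2.wt a2))
  have : Finite G2' := (G2.finite_toSet.image _)
  have hspan : Submodule.span ℂ {I : W1.carrier → ℂ → W2.carrier → W3.carrier |
        IsIntertwiner W1 W2 W3 I} = interSub W1 W2 W3 :=
    Submodule.span_eq (interSub W1 W2 W3)
  unfold FusionFinite
  rw [hspan]
  refine FiniteDimensional.of_injective
    ((coeffMap W1 W2 W3 a2 a3 G1 G2').domRestrict (interSub W1 W2 W3)) ?_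
  rw [injective_iff_map_eq_zero]
  rintro ⟨I, hI⟩ h0
  have hI : IsIntertwiner W1 W2 W3 I := hI
  apply Subtype.ext
  refine inter_eq_zero hI a2 a3 hl2 hl3 hn2 hn3 h2 h3
    (PI_top hI a2 a3 hl2 hl3 T hT ?_)
  intro t ht a
  by_cases hz : W1.projW a t = 0
  · rw [hz]; exact Submodule.zero_mem _
  intro h y hy
  by_cases hh : h = a + a2 - a3 - 1
  · have hmem : (a, W1.projW a t) ∈ G1 := by
      simp only [G1, Set.mem_iUnion]
      exact ⟨t, ht, a, hz, rfl⟩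
    let F : W2.carrier →ₗ[ℂ] W3.carrier :=
      (W3.pr a3).comp (IsLinearMap.mk' _ (hI.2.1 (W1.projW a t) h))
    have hle : W2.wt a2 ≤ LinearMap.ker F := by
      rw [← hG2', Submodule.span_le]
      intro y hy
      have e := congrFun (congrFun h0 ⟨_, hmem⟩) ⟨y, hy⟩
      have e := congrArg Subtype.val e
      subst hh
      exact e
    exact hle hy
  · exact inter_weight hI a2 a3 a h _ (W1.projW_mem a t) y hy hh

end Inter

end FusionHelpers

/-- Let `V = ⊕_{n∈ℕ} V₍ₙ₎` with `V₍₀₎ = ℂ1`, and let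
`W₁, W₂, W₃` be irreducible `V`-modules such that `dim W₁/B(W₁) < ∞`.  Then the fusion
rule `dim I(W₃; W₁W₂)` is finite. -/
theorem fusion_finite_of_BW_finite_codim (V : VOA)
    (hneg : ∀ n : ℤ, n < 0 → V.wtSpace n = ⊥)
    (h0 : V.wtSpace 0 = Submodule.span ℂ {V.one})
    (W1 W2 W3 : OrdModule V)
    (h1 : W1.toGenModule.toWeakModule.IsIrreducible)
    (h2 : W2.toGenModule.toWeakModule.IsIrreducible)
    (h3 : W3.toGenModule.toWeakModule.IsIrreducible)
    (hB : FiniteDimensional ℂ (W1.carrier ⧸ W1.toGenModule.toWeakModule.BW)) :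
    FusionFinite W1 W2 W3 := by
  exact fusion_main W1 W2 W3 h2 h3 hB
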